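/- Let α = (α₁,α₂,α₃) ∈ (0,π)³ with α₂ + α₃ > α₁ + π (a flipped hyperbolic triple, flipped at vertex 1). Then c₁(α) > 1 while c₂(α) < −1 and c₃(α) < −1. -/

import Mathlib

open Real

/-- The "cosh of the generalized length" of the edge opposite the first angle of a
Möbius triangle with angles `a`, `b`, `c`. -/
noncomputable def coshLen (a b c : ℝ) : ℝ :=
  (Real.cos a + Real.cos b * Real.cos c) / (Real.sin b * Real.sin c)

theorem one_lt_coshLen_iff {a b c : ℝ} (h : 0 < sin b * sin c) :
    1 < coshLen a b c ↔ 0 < cos a + cos (b + c) := by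
  rw [coshLen, one_lt_div h, cos_add, ← add_sub_assoc, sub_pos]

theorem coshLen_lt_neg_one_iff {a b c : ℝ} (h : 0 < sin b * sin c) :
    coshLen a b c < -1 ↔ cos a + cos (c - b) < 0 := by
  rw [coshLen, div_lt_iff₀ h, neg_one_mul, lt_neg_iff_add_neg, cos_sub, add_assoc,
    mul_comm (cos c), mul_comm (sin c)]

theorem cos_add_cos_pos_of_add_lt_pi {x y : ℝ} (hx : 0 ≤ x) (hy : 0 ≤ y) (hxy : x + y < π) :
    0 < cos x + cos y := by
  have h : cos (π - y) < cos x :=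
    cos_lt_cos_of_nonneg_of_le_pi hx (sub_le_self π hy) (lt_sub_iff_add_lt.mpr hxy)
  rwa [cos_pi_sub, neg_lt_iff_pos_add] at h

theorem cos_add_cos_neg_of_pi_lt_add {x y : ℝ} (hx : x ≤ π) (hy : y ≤ π) (hxy : π < x + y) :
    cos x + cos y < 0 := by
  have h : 0 < cos (π - x) + cos (π - y) :=
    cos_add_cos_pos_of_add_lt_pi (sub_nonneg.mpr hx) (sub_nonneg.mpr hy) (by linarith)
  rwa [cos_pi_sub, cos_pi_sub, ← neg_add, neg_pos] at h

/-- If α = (α₁,α₂,α₃) ∈ (0,π)³ satisfies α₂+α₃ > α₁+π (a flipped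
hyperbolic triple, flipped at vertex 1), then c₁(α) > 1 while c₂(α) < -1 and
c₃(α) < -1. -/
theorem flipped_hyperbolic_coshLen (α₁ α₂ α₃ : ℝ)
    (h₁ : α₁ ∈ Set.Ioo 0 π) (h₂ : α₂ ∈ Set.Ioo 0 π) (h₃ : α₃ ∈ Set.Ioo 0 π)
    (hflip : α₂ + α₃ > α₁ + π) :
    coshLen α₁ α₂ α₃ > 1 ∧ coshLen α₂ α₁ α₃ < -1 ∧ coshLen α₃ α₁ α₂ < -1 := by
  have hα₁ : 0 < α₁ := h₁.1
  have hα₂ : α₂ < π := h₂.2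
  have hα₃ : α₃ < π := h₃.2
  have hs₁ : 0 < sin α₁ := sin_pos_of_mem_Ioo h₁
  have hs₂ : 0 < sin α₂ := sin_pos_of_mem_Ioo h₂
  have hs₃ : 0 < sin α₃ := sin_pos_of_mem_Ioo h₃
  refine ⟨(one_lt_coshLen_iff (mul_pos hs₂ hs₃)).mpr ?_,
    (coshLen_lt_neg_one_iff (mul_pos hs₁ hs₃)).mpr ?_,
    (coshLen_lt_neg_one_iff (mul_pos hs₁ hs₂)).mpr ?_⟩
  · rw [← cos_two_pi_sub (α₂ + α₃)]
    exact cos_add_cos_pos_of_add_lt_pi hα₁.le (by linarith) (by linarith)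
  · exact cos_add_cos_neg_of_pi_lt_add hα₂.le (by linarith) (by linarith)
  · exact cos_add_cos_neg_of_pi_lt_add hα₃.le (by linarith) (by linarith)
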